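/- Let 𝔽_q be a finite field of odd characteristic and let η, K be multiplicative characters of 𝔽_q^× such that none of η, Kφ, ηK, ηK̄ is trivial and ηK is not the square of any multiplicative character of 𝔽_q^×. Then ₃ℙ₂(φ, η, η̄; K, K̄; 1; q) = 0. -/

import Mathlib

/-- Auxiliary to `periodP`: peels off the *first* pair of the list. -/
noncomputable def periodPAux {F : Type*} [Field F] [Fintype F]
    (A₁ : MulChar F ℂ) : List (MulChar F ℂ × MulChar F ℂ) → F → ℂ
  | [], lam => A₁⁻¹ (1 - lam)
  | p :: rest, lam => ∑ x : F, p.1 x * (p.1⁻¹ * p.2) (1 - x) * periodPAux A₁ rest (lam * x)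

/-- `periodP A₁ [(A₂,B₂),…,(Aₙ₊₁,Bₙ₊₁)] λ` is the finite-field period function
`ₙ₊₁ℙₙ(A₁,…,Aₙ₊₁; B₂,…,Bₙ₊₁; λ; q)`: it is defined inductively by
`₁ℙ₀(A₁;λ) = A₁⁻¹(1-λ)` and
`ₙ₊₁ℙₙ(A₁,…,Aₙ₊₁;B₂,…,Bₙ₊₁;λ) = ∑ₓ Aₙ₊₁(x)·(Aₙ₊₁⁻¹Bₙ₊₁)(1-x)·ₙℙₙ₋₁(A₁,…,Aₙ;B₂,…,Bₙ;λx)`,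
the sum being over `x ∈ 𝔽_q`.  (Multiplicative characters are extended by `A(0)=0`,
which is automatic for `MulChar`.) -/
noncomputable def periodP {F : Type*} [Field F] [Fintype F]
    (A₁ : MulChar F ℂ) (l : List (MulChar F ℂ × MulChar F ℂ)) (lam : F) : ℂ :=
  periodPAux A₁ l.reverse lam

/-- The complex-valued quadratic character `φ` of a finite field. -/
noncomputable def quadChar (F : Type*) [Field F] [Fintype F] [DecidableEq F] : MulChar F ℂ :=
  (quadraticChar F).ringHomComp (Int.castRingHom ℂ)

/-!
Write `P(A, B; C; λ)` for `periodP A [(B, C)] λ`, the finite-field analogue of Euler's integral for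
`₂F₁`. Up to Jacobi-sum factors it is symmetric in `A` and `B`, so `₃ℙ₂(φ, η, η⁻¹; K, K⁻¹; 1)` is
a multiple of `₃ℙ₂(η⁻¹, η, φ; K, K⁻¹; 1) = ∑ₓ φ(x) (φK⁻¹)(1 - x) P(η⁻¹, η; K; x)`. The factor
`P(η⁻¹, η; K; x)` reproduces itself under `x ↦ 1 - x` up to `(ηK)(-1) K(x) K⁻¹(1 - x)`, and this
makes the sum equal to `(ηK)(-1)` times itself. As `ηK` is not a square, `(ηK)(-1) = -1`.
-/

section CharacterSums

variable {F R : Type*} [Field F] [CommRing R] [IsDomain R]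

theorem mulChar_apply_neg_one_of_not_isSquare [Finite F]
    [HasEnoughRootsOfUnity R (Monoid.exponent Fˣ)] (hF : ringChar F ≠ 2) {χ : MulChar F R}
    (hχ : ¬IsSquare χ) : χ (-1) = -1 := by
  have sq_neg_one (ψ : MulChar F R) : ψ (-1) * ψ (-1) = 1 := by simp [← map_mul]
  have : IsCyclic (MulChar F R) := (MulChar.mulEquiv_units F R).some.symm.isCyclic.mp inferInstance
  let squares : Subgroup (MulChar F R) := (powMonoidHom 2).range
  have mem_squares (ψ : MulChar F R) : ψ ∈ squares ↔ IsSquare ψ := by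
    simp only [squares, MonoidHom.mem_range, powMonoidHom_apply, isSquare_iff_exists_sq, eq_comm]
  have index_squares : squares.index = 2 := by
    have := Fintype.ofFinite F
    have card_odd := FiniteField.odd_card_of_char_ne_two hF
    rw [IsCyclic.index_powMonoidHom_range, MulChar.card_eq_card_units_of_hasEnoughRootsOfUnity,
      Nat.card_units, Nat.card_eq_fintype_card, Nat.gcd_eq_right_iff_dvd]
    lia
  obtain ⟨ψ, hψ⟩ := MulChar.exists_apply_ne_one_of_hasEnoughRootsOfUnity F R
    (Ring.neg_one_ne_one_of_char_ne_two hF)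
  have ψ_neg_one : ψ (-1) = -1 := (mul_self_eq_one_iff.mp (sq_neg_one ψ)).resolve_left hψ
  have hψ_sq : ¬IsSquare ψ := by
    rintro ⟨S, rfl⟩
    exact hψ (sq_neg_one S)
  obtain ⟨S, hS⟩ : IsSquare (χ * ψ) := by
    rw [← mem_squares, Subgroup.mul_mem_iff_of_index_two index_squares, mem_squares, mem_squares]
    exact iff_of_false hχ hψ_sq
  have h : χ (-1) * ψ (-1) = 1 := by
    rw [← MulChar.mul_apply, hS, MulChar.mul_apply, sq_neg_one]
  rw [ψ_neg_one] at h
  linear_combination -h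

variable [Fintype F]

theorem jacobiSum_mul_inv_apply {A : MulChar F R} (hA : A ≠ 1) (B : MulChar F R) (w : F) :
    jacobiSum A B * A⁻¹ w = ∑ b, B b * (A * B)⁻¹ (b + w) := by
  rcases eq_or_ne w 0 with rfl | hw
  · have summand_eq (b : F) : B b * (A * B)⁻¹ (b + 0) = A⁻¹ b := by
      rcases eq_or_ne b 0 with rfl | hb
      · simp only [add_zero, MulChar.map_zero, mul_zero]
      · simp only [add_zero, mul_inv, MulChar.mul_apply, MulChar.inv_apply']
        rw [mul_left_comm, ← map_mul, mul_inv_cancel₀ hb, map_one, mul_one]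
    simp only [summand_eq, MulChar.map_zero, mul_zero,
      MulChar.sum_eq_zero_of_ne_one (inv_ne_one.mpr hA)]
  · let e : F ≃ F := ((Equiv.addRight w).trans (Equiv.inv F)).trans (Equiv.mulLeft₀ w hw)
    rw [jacobiSum, ← e.sum_comp, Finset.sum_mul]
    refine Finset.sum_congr rfl fun b _ ↦ ?_
    rcases eq_or_ne (b + w) 0 with hbw | hbw
    · simp only [e, Equiv.trans_apply, Equiv.coe_addRight, Equiv.inv_apply, Equiv.mulLeft₀_apply,
        hbw, inv_zero, mul_zero, MulChar.map_zero, zero_mul]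
    · have h : 1 - w * (b + w)⁻¹ = b * (b + w)⁻¹ := by field_simp; ring
      have hw1 : A w * A w⁻¹ = 1 := by rw [← map_mul, mul_inv_cancel₀ hw, map_one]
      simp only [e, Equiv.trans_apply, Equiv.coe_addRight, Equiv.inv_apply, Equiv.mulLeft₀_apply, h,
        MulChar.mul_apply, MulChar.inv_apply', map_mul]
      linear_combination A (b + w)⁻¹ * B b * B (b + w)⁻¹ * hw1

theorem jacobiSum_ne_zero {K : Type*} [Field K] (h : ringChar K ≠ ringChar F) {A B : MulChar F K}
    (hA : A ≠ 1) (hB : B ≠ 1) : jacobiSum A B ≠ 0 := by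
  by_cases hAB : A * B = 1
  · rw [← inv_eq_of_mul_eq_one_right hAB, jacobiSum_nontrivial_inv hA, neg_ne_zero,
      MulChar.apply_ne_zero_iff]
    exact isUnit_neg_one
  · have card_ne_zero : (Fintype.card F : K) ≠ 0 := by
      obtain ⟨n, hp, hcard⟩ := FiniteField.card F (ringChar F)
      rw [hcard, Nat.cast_pow]
      exact pow_ne_zero _ fun h0 ↦ h (CharP.ringChar_of_prime_eq_zero hp h0)
    exact left_ne_zero_of_mul ((jacobiSum_mul_jacobiSum_inv h hA hB hAB).trans_ne card_ne_zero)

end CharacterSums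

section QuadraticCharacter

variable {F : Type*} [Field F] [Fintype F] [DecidableEq F]

theorem quadChar_isQuadratic : (quadChar F).IsQuadratic :=
  (quadraticChar_isQuadratic F).comp _

theorem quadChar_ne_one (hF : ringChar F ≠ 2) : quadChar F ≠ 1 :=
  (MulChar.ringHomComp_ne_one_iff (Int.castRingHom ℂ).injective_int).mpr (quadraticChar_ne_one hF)

end QuadraticCharacter

section PeriodFunctions

variable {F : Type*} [Field F] [Fintype F]

theorem periodPAux_perm (A : MulChar F ℂ) {l₁ l₂ : List (MulChar F ℂ × MulChar F ℂ)}
    (h : l₁.Perm l₂) (lam : F) : periodPAux A l₁ lam = periodPAux A l₂ lam := by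
  induction h generalizing lam with
  | nil => rfl
  | cons p _ ih => simp only [periodPAux, ih]
  | swap p q l =>
    simp only [periodPAux, Finset.mul_sum]
    rw [Finset.sum_comm]
    refine Finset.sum_congr rfl fun x _ ↦ Finset.sum_congr rfl fun y _ ↦ ?_
    rw [mul_left_comm, mul_right_comm lam]
  | trans _ _ ih₁ ih₂ => rw [ih₁, ih₂]

theorem periodP_perm (A : MulChar F ℂ) {l₁ l₂ : List (MulChar F ℂ × MulChar F ℂ)}
    (h : l₁.Perm l₂) (lam : F) : periodP A l₁ lam = periodP A l₂ lam :=
  periodPAux_perm A ((l₁.reverse_perm.trans h).trans l₂.reverse_perm.symm) lam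

theorem periodP_concat (A : MulChar F ℂ) (l : List (MulChar F ℂ × MulChar F ℂ))
    (B C : MulChar F ℂ) (lam : F) :
    periodP A (l ++ [(B, C)]) lam = ∑ x, B x * (B⁻¹ * C) (1 - x) * periodP A l (lam * x) := by
  simp only [periodP, List.reverse_append, List.reverse_singleton, List.singleton_append,
    periodPAux]

theorem periodP_singleton (A B C : MulChar F ℂ) (lam : F) :
    periodP A [(B, C)] lam = ∑ x, B x * (B⁻¹ * C) (1 - x) * A⁻¹ (1 - lam * x) :=
  periodP_concat A [] B C lam

-- The right-hand side is symmetric under exchanging `(A, b)` with `(B, a)`.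
theorem jacobiSum_mul_periodP_singleton {A C : MulChar F ℂ} (hA : A ≠ 1) (hAC : A⁻¹ * C ≠ 1)
    (B : MulChar F ℂ) (lam : F) :
    jacobiSum A (A⁻¹ * C) * periodP A [(B, C)] lam =
      ∑ a, ∑ b, (B⁻¹ * C) a * (A⁻¹ * C) b * C⁻¹ ((1 + a) * (1 + b) - lam) := by
  let e : F ≃ F := (Equiv.addLeft 1).trans (Equiv.inv F)
  rw [periodP_singleton, Finset.mul_sum, ← e.sum_comp]
  refine Finset.sum_congr rfl fun a _ ↦ ?_
  rw [mul_left_comm, jacobiSum_mul_inv_apply hA, mul_inv_cancel_left]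
  simp only [e, Equiv.trans_apply, Equiv.coe_addLeft, Equiv.inv_apply]
  rcases eq_or_ne (1 + a) 0 with ha | ha
  · simp only [ha, inv_zero, MulChar.map_zero, zero_mul]
    rw [← Finset.sum_mul, ← Finset.mul_sum, MulChar.sum_eq_zero_of_ne_one hAC, mul_zero, zero_mul]
  · have one_sub_inv : 1 - (1 + a)⁻¹ = a / (1 + a) := by field_simp; ring
    rw [Finset.mul_sum]
    refine Finset.sum_congr rfl fun b _ ↦ ?_
    have arg_eq : b + (1 - lam * (1 + a)⁻¹) = ((1 + a) * (1 + b) - lam) / (1 + a) := by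
      field_simp; ring
    have hB : B (1 + a) ≠ 0 := MulChar.apply_ne_zero_iff.mpr ha.isUnit
    have hC : C (1 + a) ≠ 0 := MulChar.apply_ne_zero_iff.mpr ha.isUnit
    simp only [one_sub_inv, arg_eq, div_eq_mul_inv, map_mul, MulChar.mul_apply,
      MulChar.inv_apply_eq_inv', ← MulChar.inv_apply', inv_inv]
    field_simp

theorem jacobiSum_mul_periodP_singleton_comm {A B C : MulChar F ℂ} (hA : A ≠ 1)
    (hAC : A⁻¹ * C ≠ 1) (hB : B ≠ 1) (hBC : B⁻¹ * C ≠ 1) (lam : F) :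
    jacobiSum A (A⁻¹ * C) * periodP A [(B, C)] lam =
      jacobiSum B (B⁻¹ * C) * periodP B [(A, C)] lam := by
  rw [jacobiSum_mul_periodP_singleton hA hAC, jacobiSum_mul_periodP_singleton hB hBC,
    Finset.sum_comm]
  simp only [mul_comm, mul_left_comm]

theorem jacobiSum_mul_periodP_cons_comm {A B C : MulChar F ℂ} (hA : A ≠ 1) (hAC : A⁻¹ * C ≠ 1)
    (hB : B ≠ 1) (hBC : B⁻¹ * C ≠ 1) (l : List (MulChar F ℂ × MulChar F ℂ)) (lam : F) :
    jacobiSum A (A⁻¹ * C) * periodP A ((B, C) :: l) lam =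
      jacobiSum B (B⁻¹ * C) * periodP B ((A, C) :: l) lam := by
  induction l using List.reverseRecOn generalizing lam with
  | nil => exact jacobiSum_mul_periodP_singleton_comm hA hAC hB hBC lam
  | append_singleton l p ih =>
    obtain ⟨D, E⟩ := p
    rw [← List.cons_append, ← List.cons_append, periodP_concat, periodP_concat, Finset.mul_sum,
      Finset.mul_sum]
    refine Finset.sum_congr rfl fun x _ ↦ ?_
    rw [mul_left_comm, ih, mul_left_comm]

theorem periodP_singleton_one_sub (A B C : MulChar F ℂ) {x : F} (hx : x ≠ 0) (hx1 : x ≠ 1) :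
    periodP A [(B, C)] (1 - x) =
      (B⁻¹ * C) (-1) * (A⁻¹ * B⁻¹ * C) x * C⁻¹ (1 - x) *
        periodP B⁻¹ [(A⁻¹, A⁻¹ * B⁻¹ * C)] x := by
  have h1x : 1 - x ≠ 0 := sub_ne_zero.mpr hx1.symm
  let e : F ≃ F :=
    ((Equiv.mulLeft₀ x hx).trans (Equiv.subLeft 1)).trans (Equiv.divRight₀ (1 - x) h1x)
  obtain ⟨D, rfl⟩ : ∃ D, C = B * D := ⟨B⁻¹ * C, (mul_inv_cancel_left B C).symm⟩
  simp only [periodP_singleton, mul_assoc A⁻¹ B⁻¹, inv_mul_cancel_left, mul_inv_cancel_left,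
    inv_inv]
  rw [← e.sum_comp, Finset.mul_sum]
  refine Finset.sum_congr rfl fun w _ ↦ ?_
  have e_apply : e w = (1 - x * w) * (1 - x)⁻¹ := div_eq_mul_inv _ _
  have one_sub_e : 1 - e w = -1 * x * (1 - w) * (1 - x)⁻¹ := by
    rw [e_apply]; field_simp; ring
  have one_sub_mul_e : 1 - (1 - x) * e w = x * w := by rw [e_apply]; field_simp; ring
  rw [one_sub_e, one_sub_mul_e, e_apply]
  simp only [mul_inv, map_mul, MulChar.mul_apply,
    MulChar.inv_apply' _ (1 - x)]
  ring

theorem periodP_inv_self_one_sub (η K : MulChar F ℂ) {x : F} (hx : x ≠ 0) (hx1 : x ≠ 1) :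
    periodP η⁻¹ [(η, K)] (1 - x) =
      (η * K) (-1) * K x * K⁻¹ (1 - x) * periodP η⁻¹ [(η, K)] x := by
  have inv_neg_one : η⁻¹ (-1) = η (-1) := by rw [MulChar.inv_apply', inv_neg_one]
  simpa only [inv_inv, mul_inv_cancel, one_mul, MulChar.mul_apply, inv_neg_one] using
    periodP_singleton_one_sub η⁻¹ η K hx hx1

theorem periodP_inv_self_one_eq_zero {η K : MulChar F ℂ} (h : (η * K) (-1) = -1)
    (A : MulChar F ℂ) : periodP η⁻¹ [(η, K), (A, A ^ 2 * K⁻¹)] 1 = 0 := by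
  let summand (x : F) : ℂ := A x * (A * K⁻¹) (1 - x) * periodP η⁻¹ [(η, K)] x
  have sum_eq : periodP η⁻¹ [(η, K), (A, A ^ 2 * K⁻¹)] 1 = ∑ x, summand x := by
    have A_inv_mul : A⁻¹ * (A ^ 2 * K⁻¹) = A * K⁻¹ := by rw [sq, mul_assoc, inv_mul_cancel_left]
    exact (periodP_concat η⁻¹ [(η, K)] A (A ^ 2 * K⁻¹) 1).trans
      (by simp only [one_mul, A_inv_mul, summand])
  have summand_one_sub (x : F) : summand (1 - x) = -summand x := by
    rcases eq_or_ne x 0 with rfl | hx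
    · simp [summand, MulChar.map_zero]
    rcases eq_or_ne x 1 with rfl | hx1
    · simp [summand, MulChar.map_zero]
    have K_mul_inv : K x * K⁻¹ x = 1 := by
      rw [MulChar.inv_apply', ← map_mul, mul_inv_cancel₀ hx, map_one]
    simp only [summand, sub_sub_cancel, periodP_inv_self_one_sub η K hx hx1, h, MulChar.mul_apply]
    linear_combination
      -(A x * A (1 - x) * K⁻¹ (1 - x) * periodP η⁻¹ [(η, K)] x) * K_mul_inv
  have sum_eq_neg : ∑ x, summand x = -∑ x, summand x := by
    rw [← Finset.sum_neg_distrib, ← (Equiv.subLeft (1 : F)).sum_comp]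
    exact Finset.sum_congr rfl fun x _ ↦ summand_one_sub x
  rw [sum_eq, self_eq_neg.mp sum_eq_neg]

end PeriodFunctions

/-- Vanishing of `₃ℙ₂(φ,η,η̄;K,K̄;1)` when `ηK` is not a square of any multiplicative
character. -/
theorem statement5 {F : Type*} [Field F] [Fintype F] [DecidableEq F]
    (hodd : ringChar F ≠ 2) (η K : MulChar F ℂ)
    (hη : η ≠ 1) (hKφ : K * quadChar F ≠ 1) (hηK : η * K ≠ 1) (hηK' : η * K⁻¹ ≠ 1)
    (hns : ∀ S : MulChar F ℂ, η * K ≠ S ^ 2) :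
    periodP (quadChar F) [(η, K), (η⁻¹, K⁻¹)] 1 = 0 := by
  have hφ : quadChar F ≠ 1 := quadChar_ne_one hodd
  have φ_sq : quadChar F ^ 2 = 1 := quadChar_isQuadratic.sq_eq_one
  have hφK : (quadChar F)⁻¹ * K⁻¹ ≠ 1 := by rwa [← mul_inv_rev, inv_ne_one]
  have neg_one_apply : (η * K) (-1) = -1 :=
    mulChar_apply_neg_one_of_not_isSquare hodd fun h ↦
      have ⟨S, hS⟩ := h.exists_sq
      hns S hS
  have char_ne : ringChar ℂ ≠ ringChar F :=
    ringChar.eq_zero (R := ℂ) ▸ (CharP.ringChar_ne_zero_of_finite F).symm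
  have well_posed : periodP η⁻¹ [(η, K), (quadChar F, K⁻¹)] 1 = 0 := by
    simpa only [φ_sq, one_mul] using periodP_inv_self_one_eq_zero neg_one_apply (quadChar F)
  have transform := jacobiSum_mul_periodP_cons_comm hφ hφK (inv_ne_one.mpr hη)
    (by rwa [inv_inv]) [(η, K)] 1
  rw [periodP_perm _ (.swap _ _ _), periodP_perm η⁻¹ (.swap _ _ _), well_posed,
    mul_zero] at transform
  exact (mul_eq_zero.mp transform).resolve_left (jacobiSum_ne_zero char_ne hφ hφK)
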